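/- There is a family of first-order sequents {S_i}_{i<ω} such that: (1) the size of S_i is polynomial in i; (2) there is no elementary function of i bounding the size of the smallest cut-free LK-proofs of S_i; (3) S_i has LK-proofs with cuts of size polynomially bounded in i; (4) S_i contains weak quantifiers only; and (5) for every cut-formula A occurring in the polynomial-size proof of S_i, the formula ∀x̄ (A^M → A^M) occurs on the left-hand side of the end-sequent S_i, where A^M is the matrix of A. -/

import Mathlib

namespace EpsCalc

/-! ## Syntax: terms and formulas of first-order logic extended by epsilon terms.
We use a locally nameless representation: `bvar` are de Bruijn indices for bound
variables (bound by `all`, `ex`, or `eps`), `fvar` are named free variables. -/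

mutual
inductive Tm : Type where
  | bvar : ℕ → Tm
  | fvar : ℕ → Tm
  | func : ℕ → Tms → Tm
  | eps  : Fm → Tm          -- the epsilon term ε_x A(x)

inductive Tms : Type where
  | nil  : Tms
  | cons : Tm → Tms → Tms

inductive Fm : Type where
  | atom : ℕ → Tms → Fm
  | and  : Fm → Fm → Fm
  | or   : Fm → Fm → Fm
  | imp  : Fm → Fm → Fm
  | not  : Fm → Fm
  | all  : Fm → Fm          -- ∀ binding de Bruijn index 0
  | ex   : Fm → Fm          -- ∃ binding de Bruijn index 0
end

/-! lifting of bound variables (shift indices ≥ k by one) -/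
mutual
def liftT (k : ℕ) : Tm → Tm
  | .bvar n => if n < k then .bvar n else .bvar (n+1)
  | .fvar a => .fvar a
  | .func f ts => .func f (liftTs k ts)
  | .eps A => .eps (liftF (k+1) A)
def liftTs (k : ℕ) : Tms → Tms
  | .nil => .nil
  | .cons t ts => .cons (liftT k t) (liftTs k ts)
def liftF (k : ℕ) : Fm → Fm
  | .atom p ts => .atom p (liftTs k ts)
  | .and A B => .and (liftF k A) (liftF k B)
  | .or A B => .or (liftF k A) (liftF k B)
  | .imp A B => .imp (liftF k A) (liftF k B)
  | .not A => .not (liftF k A)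
  | .all A => .all (liftF (k+1) A)
  | .ex A => .ex (liftF (k+1) A)
end

/-! substitution of a term for the bound variable k -/
mutual
def subT (k : ℕ) (u : Tm) : Tm → Tm
  | .bvar n => if n = k then u else if n < k then .bvar n else .bvar (n-1)
  | .fvar a => .fvar a
  | .func f ts => .func f (subTs k u ts)
  | .eps A => .eps (subF (k+1) (liftT 0 u) A)
def subTs (k : ℕ) (u : Tm) : Tms → Tms
  | .nil => .nil
  | .cons t ts => .cons (subT k u t) (subTs k u ts)
def subF (k : ℕ) (u : Tm) : Fm → Fm
  | .atom p ts => .atom p (subTs k u ts)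
  | .and A B => .and (subF k u A) (subF k u B)
  | .or A B => .or (subF k u A) (subF k u B)
  | .imp A B => .imp (subF k u A) (subF k u B)
  | .not A => .not (subF k u A)
  | .all A => .all (subF (k+1) (liftT 0 u) A)
  | .ex A => .ex (subF (k+1) (liftT 0 u) A)
end

/-- instantiate the outermost bound variable of `A` with the term `t`:  A(t) -/
def inst0 (A : Fm) (t : Tm) : Fm := subF 0 t A

/-! substitution of a term for a *free* variable -/
mutual
def sfvT (a : ℕ) (u : Tm) : Tm → Tm
  | .bvar n => .bvar n
  | .fvar b => if b = a then u else .fvar b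
  | .func f ts => .func f (sfvTs a u ts)
  | .eps A => .eps (sfvF a (liftT 0 u) A)
def sfvTs (a : ℕ) (u : Tm) : Tms → Tms
  | .nil => .nil
  | .cons t ts => .cons (sfvT a u t) (sfvTs a u ts)
def sfvF (a : ℕ) (u : Tm) : Fm → Fm
  | .atom p ts => .atom p (sfvTs a u ts)
  | .and A B => .and (sfvF a u A) (sfvF a u B)
  | .or A B => .or (sfvF a u A) (sfvF a u B)
  | .imp A B => .imp (sfvF a u A) (sfvF a u B)
  | .not A => .not (sfvF a u A)
  | .all A => .all (sfvF a (liftT 0 u) A)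
  | .ex A => .ex (sfvF a (liftT 0 u) A)
end

/-! abstraction of a free variable into a bound variable (for universal closure) -/
mutual
def abT (a k : ℕ) : Tm → Tm
  | .bvar n => .bvar n
  | .fvar b => if b = a then .bvar k else .fvar b
  | .func f ts => .func f (abTs a k ts)
  | .eps A => .eps (abF a (k+1) A)
def abTs (a k : ℕ) : Tms → Tms
  | .nil => .nil
  | .cons t ts => .cons (abT a k t) (abTs a k ts)
def abF (a k : ℕ) : Fm → Fm
  | .atom p ts => .atom p (abTs a k ts)
  | .and A B => .and (abF a k A) (abF a k B)
  | .or A B => .or (abF a k A) (abF a k B)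
  | .imp A B => .imp (abF a k A) (abF a k B)
  | .not A => .not (abF a k A)
  | .all A => .all (abF a (k+1) A)
  | .ex A => .ex (abF a (k+1) A)
end

/-! free variables -/
mutual
def fvT : Tm → List ℕ
  | .bvar _ => []
  | .fvar a => [a]
  | .func _ ts => fvTs ts
  | .eps A => fvF A
def fvTs : Tms → List ℕ
  | .nil => []
  | .cons t ts => fvT t ++ fvTs ts
def fvF : Fm → List ℕ
  | .atom _ ts => fvTs ts
  | .and A B => fvF A ++ fvF B
  | .or A B => fvF A ++ fvF B
  | .imp A B => fvF A ++ fvF B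
  | .not A => fvF A
  | .all A => fvF A
  | .ex A => fvF A
end

/-! function symbols occurring in an expression -/
mutual
def fsT : Tm → List ℕ
  | .bvar _ => []
  | .fvar _ => []
  | .func f ts => f :: fsTs ts
  | .eps A => fsF A
def fsTs : Tms → List ℕ
  | .nil => []
  | .cons t ts => fsT t ++ fsTs ts
def fsF : Fm → List ℕ
  | .atom _ ts => fsTs ts
  | .and A B => fsF A ++ fsF B
  | .or A B => fsF A ++ fsF B
  | .imp A B => fsF A ++ fsF B
  | .not A => fsF A
  | .all A => fsF A
  | .ex A => fsF A
end

/-! number of symbols (size) -/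
mutual
def szT : Tm → ℕ
  | .bvar _ => 1
  | .fvar _ => 1
  | .func _ ts => 1 + szTs ts
  | .eps A => 1 + szF A
def szTs : Tms → ℕ
  | .nil => 0
  | .cons t ts => szT t + szTs ts
def szF : Fm → ℕ
  | .atom _ ts => 1 + szTs ts
  | .and A B => 1 + szF A + szF B
  | .or A B => 1 + szF A + szF B
  | .imp A B => 1 + szF A + szF B
  | .not A => 1 + szF A
  | .all A => 1 + szF A
  | .ex A => 1 + szF A
end

/-! epsilon-freeness (first-order language) and quantifier-freeness (epsilon language) -/
mutual
def noEpsT : Tm → Bool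
  | .bvar _ => true
  | .fvar _ => true
  | .func _ ts => noEpsTs ts
  | .eps _ => false
def noEpsTs : Tms → Bool
  | .nil => true
  | .cons t ts => noEpsT t && noEpsTs ts
def noEpsF : Fm → Bool
  | .atom _ ts => noEpsTs ts
  | .and A B => noEpsF A && noEpsF B
  | .or A B => noEpsF A && noEpsF B
  | .imp A B => noEpsF A && noEpsF B
  | .not A => noEpsF A
  | .all A => noEpsF A
  | .ex A => noEpsF A
end

/-- `A` is a formula of the first-order language: it contains no epsilon terms. -/
def isFO (A : Fm) : Bool := noEpsF A

/-- quantifier-freeness: `A` belongs to the language of the epsilon calculus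
(propositional language over epsilon terms) iff `qfree A`. -/
def qfree : Fm → Bool
  | .atom _ _ => true
  | .and A B => qfree A && qfree B
  | .or A B => qfree A && qfree B
  | .imp A B => qfree A && qfree B
  | .not A => qfree A
  | .all _ => false
  | .ex _ => false

/-- The epsilon translation [A]^ε of a formula. -/
def epsT : Fm → Fm
  | .atom p ts => .atom p ts
  | .and A B => .and (epsT A) (epsT B)
  | .or A B => .or (epsT A) (epsT B)
  | .imp A B => .imp (epsT A) (epsT B)
  | .not A => .not (epsT A)
  | .ex A => inst0 (epsT A) (.eps (epsT A))
  | .all A => inst0 (epsT A) (.eps (.not (epsT A)))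

/-! ## The matrix A^M of a formula: delete all quantifiers and replace the
variables bound by them by fresh free variables. -/
mutual
def mxT (b d : ℕ) : Tm → Tm
  | .bvar n => if n < d then .fvar (b + (d - 1 - n)) else .bvar (n - d)
  | .fvar a => .fvar a
  | .func f ts => .func f (mxTs b d ts)
  | .eps A => .eps A          -- (the matrix is only used on epsilon-free formulas)
def mxTs (b d : ℕ) : Tms → Tms
  | .nil => .nil
  | .cons t ts => .cons (mxT b d t) (mxTs b d ts)
def mxF (b d : ℕ) : Fm → Fm
  | .atom p ts => .atom p (mxTs b d ts)
  | .and A B => .and (mxF b d A) (mxF b d B)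
  | .or A B => .or (mxF b d A) (mxF b d B)
  | .imp A B => .imp (mxF b d A) (mxF b d B)
  | .not A => .not (mxF b d A)
  | .all A => mxF b (d+1) A
  | .ex A => mxF b (d+1) A
end

def maxFv (A : Fm) : ℕ := (fvF A).foldr max 0

/-- the matrix A^M of A -/
def matrix (A : Fm) : Fm := mxF (maxFv A + 1) 0 A

/-- universal closure ∀x̄ A over all free variables of A -/
def uclose (A : Fm) : Fm :=
  ((fvF A).dedup).foldr (fun a B => Fm.all (abF a 0 B)) A

/-! ## Weak/strong quantifier occurrences.
`posW A` : all quantifier occurrences of `A` are weak when `A` occurs in the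
succedent; `negW A` : likewise for the antecedent. -/
mutual
def posW : Fm → Bool
  | .atom _ _ => true
  | .and A B => posW A && posW B
  | .or A B => posW A && posW B
  | .imp A B => negW A && posW B
  | .not A => negW A
  | .all _ => false
  | .ex A => posW A
def negW : Fm → Bool
  | .atom _ _ => true
  | .and A B => negW A && negW B
  | .or A B => negW A && negW B
  | .imp A B => posW A && negW B
  | .not A => posW A
  | .all A => negW A
  | .ex _ => false
end

/-- the sequent Γ ⊢ Δ contains weak quantifier occurrences only -/
def WeakSeq (Γ Δ : List Fm) : Prop :=
  (∀ A ∈ Γ, negW A = true) ∧ (∀ A ∈ Δ, posW A = true)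

/-- the sequent Γ ⊢ Δ is in the first-order language -/
def FOSeq (Γ Δ : List Fm) : Prop :=
  (∀ A ∈ Γ, isFO A = true) ∧ (∀ A ∈ Δ, isFO A = true)

/-- the sequent Γ ⊢ Δ is in the language of the epsilon calculus -/
def EpsSeq (Γ Δ : List Fm) : Prop :=
  (∀ A ∈ Γ, qfree A = true) ∧ (∀ A ∈ Δ, qfree A = true)

def fvSeq (Γ Δ : List Fm) : List ℕ :=
  (Γ ++ Δ).foldr (fun A l => fvF A ++ l) []

def fsSeq (Γ Δ : List Fm) : List ℕ :=
  (Γ ++ Δ).foldr (fun A l => fsF A ++ l) []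

def seqSize (Γ Δ : List Fm) : ℕ :=
  (Γ ++ Δ).foldr (fun A n => szF A + n) 0


/-! ## LK derivation trees.
`Deriv Γ Δ` are derivation trees of the sequent Γ ⊢ Δ built from the rules of
Gentzen's LK, where the strong quantifier rules `allR`/`exL` carry an
eigenvariable but *no* correctness condition; the various eigenvariable
disciplines (LK, LK⁺, LK⁺⁺) are imposed as predicates on the trees below. -/
inductive Deriv : List Fm → List Fm → Type where
  | ax (A : Fm) : Deriv [A] [A]
  | andL (A B : Fm) (Γ Δ : List Fm) :
      Deriv (A :: B :: Γ) Δ → Deriv (Fm.and A B :: Γ) Δ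
  | andR (A B : Fm) (Γ₁ Δ₁ Γ₂ Δ₂ : List Fm) :
      Deriv Γ₁ (A :: Δ₁) → Deriv Γ₂ (B :: Δ₂) →
      Deriv (Γ₁ ++ Γ₂) (Fm.and A B :: (Δ₁ ++ Δ₂))
  | orL (A B : Fm) (Γ₁ Δ₁ Γ₂ Δ₂ : List Fm) :
      Deriv (A :: Γ₁) Δ₁ → Deriv (B :: Γ₂) Δ₂ →
      Deriv (Fm.or A B :: (Γ₁ ++ Γ₂)) (Δ₁ ++ Δ₂)
  | orR (A B : Fm) (Γ Δ : List Fm) :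
      Deriv Γ (A :: B :: Δ) → Deriv Γ (Fm.or A B :: Δ)
  | impL (A B : Fm) (Γ₁ Δ₁ Γ₂ Δ₂ : List Fm) :
      Deriv Γ₁ (A :: Δ₁) → Deriv (B :: Γ₂) Δ₂ →
      Deriv (Fm.imp A B :: (Γ₁ ++ Γ₂)) (Δ₁ ++ Δ₂)
  | impR (A B : Fm) (Γ Δ : List Fm) :
      Deriv (A :: Γ) (B :: Δ) → Deriv Γ (Fm.imp A B :: Δ)
  | notL (A : Fm) (Γ Δ : List Fm) :
      Deriv Γ (A :: Δ) → Deriv (Fm.not A :: Γ) Δ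
  | notR (A : Fm) (Γ Δ : List Fm) :
      Deriv (A :: Γ) Δ → Deriv Γ (Fm.not A :: Δ)
  | wL (A : Fm) (Γ Δ : List Fm) : Deriv Γ Δ → Deriv (A :: Γ) Δ
  | wR (A : Fm) (Γ Δ : List Fm) : Deriv Γ Δ → Deriv Γ (A :: Δ)
  | cL (A : Fm) (Γ Δ : List Fm) : Deriv (A :: A :: Γ) Δ → Deriv (A :: Γ) Δ
  | cR (A : Fm) (Γ Δ : List Fm) : Deriv Γ (A :: A :: Δ) → Deriv Γ (A :: Δ)
  | cut (A : Fm) (Γ₁ Δ₁ Γ₂ Δ₂ : List Fm) :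
      Deriv Γ₁ (A :: Δ₁) → Deriv (A :: Γ₂) Δ₂ →
      Deriv (Γ₁ ++ Γ₂) (Δ₁ ++ Δ₂)
  | allL (t : Tm) (A : Fm) (Γ Δ : List Fm) :
      Deriv (inst0 A t :: Γ) Δ → Deriv (Fm.all A :: Γ) Δ
  | allR (a : ℕ) (A : Fm) (Γ Δ : List Fm) :
      Deriv Γ (inst0 A (Tm.fvar a) :: Δ) → Deriv Γ (Fm.all A :: Δ)
  | exL (a : ℕ) (A : Fm) (Γ Δ : List Fm) :
      Deriv (inst0 A (Tm.fvar a) :: Γ) Δ → Deriv (Fm.ex A :: Γ) Δ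
  | exR (t : Tm) (A : Fm) (Γ Δ : List Fm) :
      Deriv Γ (inst0 A t :: Δ) → Deriv Γ (Fm.ex A :: Δ)
  | permL (Γ Γ' Δ : List Fm) : Γ.Perm Γ' → Deriv Γ Δ → Deriv Γ' Δ
  | permR (Γ Δ Δ' : List Fm) : Δ.Perm Δ' → Deriv Γ Δ → Deriv Γ Δ'

namespace Deriv

/-- the size of a derivation: the number of inference steps occurring in it -/
def size : ∀ {Γ Δ}, Deriv Γ Δ → ℕ
  | _, _, ax _ => 1
  | _, _, andL _ _ _ _ d => d.size + 1
  | _, _, andR _ _ _ _ _ _ d e => d.size + e.size + 1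
  | _, _, orL _ _ _ _ _ _ d e => d.size + e.size + 1
  | _, _, orR _ _ _ _ d => d.size + 1
  | _, _, impL _ _ _ _ _ _ d e => d.size + e.size + 1
  | _, _, impR _ _ _ _ d => d.size + 1
  | _, _, notL _ _ _ d => d.size + 1
  | _, _, notR _ _ _ d => d.size + 1
  | _, _, wL _ _ _ d => d.size + 1
  | _, _, wR _ _ _ d => d.size + 1
  | _, _, cL _ _ _ d => d.size + 1
  | _, _, cR _ _ _ d => d.size + 1
  | _, _, cut _ _ _ _ _ d e => d.size + e.size + 1
  | _, _, allL _ _ _ _ d => d.size + 1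
  | _, _, allR _ _ _ _ d => d.size + 1
  | _, _, exL _ _ _ _ d => d.size + 1
  | _, _, exR _ _ _ _ d => d.size + 1
  | _, _, permL _ _ _ _ d => d.size + 1
  | _, _, permR _ _ _ _ d => d.size + 1

/-- the list of cut formulas occurring in a derivation -/
def cutFms : ∀ {Γ Δ}, Deriv Γ Δ → List Fm
  | _, _, ax _ => []
  | _, _, andL _ _ _ _ d => d.cutFms
  | _, _, andR _ _ _ _ _ _ d e => d.cutFms ++ e.cutFms
  | _, _, orL _ _ _ _ _ _ d e => d.cutFms ++ e.cutFms
  | _, _, orR _ _ _ _ d => d.cutFms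
  | _, _, impL _ _ _ _ _ _ d e => d.cutFms ++ e.cutFms
  | _, _, impR _ _ _ _ d => d.cutFms
  | _, _, notL _ _ _ d => d.cutFms
  | _, _, notR _ _ _ d => d.cutFms
  | _, _, wL _ _ _ d => d.cutFms
  | _, _, wR _ _ _ d => d.cutFms
  | _, _, cL _ _ _ d => d.cutFms
  | _, _, cR _ _ _ d => d.cutFms
  | _, _, cut A _ _ _ _ d e => A :: (d.cutFms ++ e.cutFms)
  | _, _, allL _ _ _ _ d => d.cutFms
  | _, _, allR _ _ _ _ d => d.cutFms
  | _, _, exL _ _ _ _ d => d.cutFms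
  | _, _, exR _ _ _ _ d => d.cutFms
  | _, _, permL _ _ _ _ d => d.cutFms
  | _, _, permR _ _ _ _ d => d.cutFms

/-- data of the strong quantifier inferences of a derivation:
(eigenvariable, auxiliary formula, main formula) -/
def strongs : ∀ {Γ Δ}, Deriv Γ Δ → List (ℕ × Fm × Fm)
  | _, _, ax _ => []
  | _, _, andL _ _ _ _ d => d.strongs
  | _, _, andR _ _ _ _ _ _ d e => d.strongs ++ e.strongs
  | _, _, orL _ _ _ _ _ _ d e => d.strongs ++ e.strongs
  | _, _, orR _ _ _ _ d => d.strongs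
  | _, _, impL _ _ _ _ _ _ d e => d.strongs ++ e.strongs
  | _, _, impR _ _ _ _ d => d.strongs
  | _, _, notL _ _ _ d => d.strongs
  | _, _, notR _ _ _ d => d.strongs
  | _, _, wL _ _ _ d => d.strongs
  | _, _, wR _ _ _ d => d.strongs
  | _, _, cL _ _ _ d => d.strongs
  | _, _, cR _ _ _ d => d.strongs
  | _, _, cut _ _ _ _ _ d e => d.strongs ++ e.strongs
  | _, _, allL _ _ _ _ d => d.strongs
  | _, _, allR a A _ _ d => (a, inst0 A (Tm.fvar a), Fm.all A) :: d.strongs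
  | _, _, exL a A _ _ d => (a, inst0 A (Tm.fvar a), Fm.ex A) :: d.strongs
  | _, _, exR _ _ _ _ d => d.strongs
  | _, _, permL _ _ _ _ d => d.strongs
  | _, _, permR _ _ _ _ d => d.strongs

/-- the standard (local) eigenvariable conditions of LK: the eigenvariable of a
strong quantifier inference does not occur free in its conclusion -/
def Std : ∀ {Γ Δ}, Deriv Γ Δ → Prop
  | _, _, ax _ => True
  | _, _, andL _ _ _ _ d => d.Std
  | _, _, andR _ _ _ _ _ _ d e => d.Std ∧ e.Std
  | _, _, orL _ _ _ _ _ _ d e => d.Std ∧ e.Std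
  | _, _, orR _ _ _ _ d => d.Std
  | _, _, impL _ _ _ _ _ _ d e => d.Std ∧ e.Std
  | _, _, impR _ _ _ _ d => d.Std
  | _, _, notL _ _ _ d => d.Std
  | _, _, notR _ _ _ d => d.Std
  | _, _, wL _ _ _ d => d.Std
  | _, _, wR _ _ _ d => d.Std
  | _, _, cL _ _ _ d => d.Std
  | _, _, cR _ _ _ d => d.Std
  | _, _, cut _ _ _ _ _ d e => d.Std ∧ e.Std
  | _, _, allL _ _ _ _ d => d.Std
  | _, _, allR a A Γ Δ d => a ∉ fvSeq Γ (Fm.all A :: Δ) ∧ d.Std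
  | _, _, exL a A Γ Δ d => a ∉ fvSeq (Fm.ex A :: Γ) Δ ∧ d.Std
  | _, _, exR _ _ _ _ d => d.Std
  | _, _, permL _ _ _ _ d => d.Std
  | _, _, permR _ _ _ _ d => d.Std

end Deriv

/-- the side variable relation `<_φ`: `b` is a side variable of `a` in `φ` if `φ`
contains a strong quantifier inference with eigenvariable `a` whose auxiliary
formula contains the free variable `b` -/
def sideRel {Γ Δ} (d : Deriv Γ Δ) (a b : ℕ) : Prop :=
  ∃ e ∈ d.strongs, e.1 = a ∧ b ∈ fvF e.2.1 ∧ b ≠ a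

/-- acyclicity of a binary relation -/
def Acyc (r : ℕ → ℕ → Prop) : Prop := ∀ x, ¬ Relation.TransGen r x x

/-- LK⁺-suitability of (all strong quantifier inferences of) a derivation:
substitutability, the side variable condition, and weak regularity. -/
def SuitP {Γ Δ} (d : Deriv Γ Δ) : Prop :=
  (∀ e ∈ d.strongs, e.1 ∉ fvSeq Γ Δ) ∧
  Acyc (sideRel d) ∧
  (d.strongs.map (·.1)).Nodup

/-- LK⁺⁺-suitability: substitutability, the side variable condition, and very
weak regularity (equal eigenvariables only for equal main formulas). -/
def SuitPP {Γ Δ} (d : Deriv Γ Δ) : Prop :=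
  (∀ e ∈ d.strongs, e.1 ∉ fvSeq Γ Δ) ∧
  Acyc (sideRel d) ∧
  (∀ e₁ ∈ d.strongs, ∀ e₂ ∈ d.strongs, e₁.1 = e₂.1 → e₁.2.2 = e₂.2.2)

/-! ## The sequent calculus Lε of the epsilon calculus:
atomic axioms, the propositional, structural and cut rules of LK, the weak
quantifier rules ∃_r and ∀_l producing epsilon terms, and a substitution rule
replacing the strong quantifier inferences. -/
inductive EDeriv : List Fm → List Fm → Type where
  | ax (p : ℕ) (ts : Tms) : EDeriv [Fm.atom p ts] [Fm.atom p ts]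
  | andL (A B : Fm) (Γ Δ : List Fm) :
      EDeriv (A :: B :: Γ) Δ → EDeriv (Fm.and A B :: Γ) Δ
  | andR (A B : Fm) (Γ₁ Δ₁ Γ₂ Δ₂ : List Fm) :
      EDeriv Γ₁ (A :: Δ₁) → EDeriv Γ₂ (B :: Δ₂) →
      EDeriv (Γ₁ ++ Γ₂) (Fm.and A B :: (Δ₁ ++ Δ₂))
  | orL (A B : Fm) (Γ₁ Δ₁ Γ₂ Δ₂ : List Fm) :
      EDeriv (A :: Γ₁) Δ₁ → EDeriv (B :: Γ₂) Δ₂ →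
      EDeriv (Fm.or A B :: (Γ₁ ++ Γ₂)) (Δ₁ ++ Δ₂)
  | orR (A B : Fm) (Γ Δ : List Fm) :
      EDeriv Γ (A :: B :: Δ) → EDeriv Γ (Fm.or A B :: Δ)
  | impL (A B : Fm) (Γ₁ Δ₁ Γ₂ Δ₂ : List Fm) :
      EDeriv Γ₁ (A :: Δ₁) → EDeriv (B :: Γ₂) Δ₂ →
      EDeriv (Fm.imp A B :: (Γ₁ ++ Γ₂)) (Δ₁ ++ Δ₂)
  | impR (A B : Fm) (Γ Δ : List Fm) :
      EDeriv (A :: Γ) (B :: Δ) → EDeriv Γ (Fm.imp A B :: Δ)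
  | notL (A : Fm) (Γ Δ : List Fm) :
      EDeriv Γ (A :: Δ) → EDeriv (Fm.not A :: Γ) Δ
  | notR (A : Fm) (Γ Δ : List Fm) :
      EDeriv (A :: Γ) Δ → EDeriv Γ (Fm.not A :: Δ)
  | wL (A : Fm) (Γ Δ : List Fm) : EDeriv Γ Δ → EDeriv (A :: Γ) Δ
  | wR (A : Fm) (Γ Δ : List Fm) : EDeriv Γ Δ → EDeriv Γ (A :: Δ)
  | cL (A : Fm) (Γ Δ : List Fm) : EDeriv (A :: A :: Γ) Δ → EDeriv (A :: Γ) Δ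
  | cR (A : Fm) (Γ Δ : List Fm) : EDeriv Γ (A :: A :: Δ) → EDeriv Γ (A :: Δ)
  | cut (A : Fm) (Γ₁ Δ₁ Γ₂ Δ₂ : List Fm) :
      EDeriv Γ₁ (A :: Δ₁) → EDeriv (A :: Γ₂) Δ₂ →
      EDeriv (Γ₁ ++ Γ₂) (Δ₁ ++ Δ₂)
  | allL (t : Tm) (A : Fm) (Γ Δ : List Fm) :
      EDeriv (inst0 A t :: Γ) Δ →
      EDeriv (inst0 A (Tm.eps (Fm.not A)) :: Γ) Δ
  | exR (t : Tm) (A : Fm) (Γ Δ : List Fm) :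
      EDeriv Γ (inst0 A t :: Δ) →
      EDeriv Γ (inst0 A (Tm.eps A) :: Δ)
  | subst (a : ℕ) (t : Tm) (Γ Δ : List Fm) :
      EDeriv Γ Δ → EDeriv (Γ.map (sfvF a t)) (Δ.map (sfvF a t))
  | permL (Γ Γ' Δ : List Fm) : Γ.Perm Γ' → EDeriv Γ Δ → EDeriv Γ' Δ
  | permR (Γ Δ Δ' : List Fm) : Δ.Perm Δ' → EDeriv Γ Δ → EDeriv Γ Δ'

namespace EDeriv

/-- the size of an Lε derivation -/
def size : ∀ {Γ Δ}, EDeriv Γ Δ → ℕ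
  | _, _, ax _ _ => 1
  | _, _, andL _ _ _ _ d => d.size + 1
  | _, _, andR _ _ _ _ _ _ d e => d.size + e.size + 1
  | _, _, orL _ _ _ _ _ _ d e => d.size + e.size + 1
  | _, _, orR _ _ _ _ d => d.size + 1
  | _, _, impL _ _ _ _ _ _ d e => d.size + e.size + 1
  | _, _, impR _ _ _ _ d => d.size + 1
  | _, _, notL _ _ _ d => d.size + 1
  | _, _, notR _ _ _ d => d.size + 1
  | _, _, wL _ _ _ d => d.size + 1
  | _, _, wR _ _ _ d => d.size + 1
  | _, _, cL _ _ _ d => d.size + 1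
  | _, _, cR _ _ _ d => d.size + 1
  | _, _, cut _ _ _ _ _ d e => d.size + e.size + 1
  | _, _, allL _ _ _ _ d => d.size + 1
  | _, _, exR _ _ _ _ d => d.size + 1
  | _, _, subst _ _ _ _ d => d.size + 1
  | _, _, permL _ _ _ _ d => d.size + 1
  | _, _, permR _ _ _ _ d => d.size + 1

/-- the list of cut formulas occurring in an Lε derivation -/
def cutFms : ∀ {Γ Δ}, EDeriv Γ Δ → List Fm
  | _, _, ax _ _ => []
  | _, _, andL _ _ _ _ d => d.cutFms
  | _, _, andR _ _ _ _ _ _ d e => d.cutFms ++ e.cutFms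
  | _, _, orL _ _ _ _ _ _ d e => d.cutFms ++ e.cutFms
  | _, _, orR _ _ _ _ d => d.cutFms
  | _, _, impL _ _ _ _ _ _ d e => d.cutFms ++ e.cutFms
  | _, _, impR _ _ _ _ d => d.cutFms
  | _, _, notL _ _ _ d => d.cutFms
  | _, _, notR _ _ _ d => d.cutFms
  | _, _, wL _ _ _ d => d.cutFms
  | _, _, wR _ _ _ d => d.cutFms
  | _, _, cL _ _ _ d => d.cutFms
  | _, _, cR _ _ _ d => d.cutFms
  | _, _, cut A _ _ _ _ d e => A :: (d.cutFms ++ e.cutFms)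
  | _, _, allL _ _ _ _ d => d.cutFms
  | _, _, exR _ _ _ _ d => d.cutFms
  | _, _, subst _ _ _ _ d => d.cutFms
  | _, _, permL _ _ _ _ d => d.cutFms
  | _, _, permR _ _ _ _ d => d.cutFms

end EDeriv

/-! ## Elementary functions and polynomial bounds -/

/-- `iterExp k n` is the `k`-fold iterated exponential 2^2^...^n. -/
def iterExp : ℕ → ℕ → ℕ
  | 0, n => n
  | k+1, n => 2 ^ iterExp k n

/-- A function ℕ → ℕ is elementary (in the sense of Kalmár: definable by a
quantifier-free formula from +, ×, and x ↦ 2^x) iff it is majorized by some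
fixed iterated exponential; we use this growth-rate characterization. -/
def IsElementary (f : ℕ → ℕ) : Prop := ∃ k, ∀ n, f n ≤ iterExp k n

/-- `g` is polynomially bounded -/
def PolyBdd (g : ℕ → ℕ) : Prop := ∃ p : Polynomial ℕ, ∀ n, g n ≤ p.eval n

/-! ## Skolemization (relationally): `SkP F A B` (`SkN F A B`) holds if `B` is
obtained from `A`, occurring in the succedent (antecedent), by replacing the
strong quantifiers by terms built from fresh function symbols in `F`. -/
mutual
inductive SkP (F : ℕ → Prop) : Fm → Fm → Prop where
  | atom (p ts) : SkP F (Fm.atom p ts) (Fm.atom p ts)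
  | and {A A' B B'} : SkP F A A' → SkP F B B' → SkP F (Fm.and A B) (Fm.and A' B')
  | or {A A' B B'} : SkP F A A' → SkP F B B' → SkP F (Fm.or A B) (Fm.or A' B')
  | imp {A A' B B'} : SkN F A A' → SkP F B B' → SkP F (Fm.imp A B) (Fm.imp A' B')
  | not {A A'} : SkN F A A' → SkP F (Fm.not A) (Fm.not A')
  | ex {A A'} : SkP F A A' → SkP F (Fm.ex A) (Fm.ex A')
  | all {A B} (f : ℕ) (ts : Tms) : F f →
      SkP F (inst0 A (Tm.func f ts)) B → SkP F (Fm.all A) B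
inductive SkN (F : ℕ → Prop) : Fm → Fm → Prop where
  | atom (p ts) : SkN F (Fm.atom p ts) (Fm.atom p ts)
  | and {A A' B B'} : SkN F A A' → SkN F B B' → SkN F (Fm.and A B) (Fm.and A' B')
  | or {A A' B B'} : SkN F A A' → SkN F B B' → SkN F (Fm.or A B) (Fm.or A' B')
  | imp {A A' B B'} : SkP F A A' → SkN F B B' → SkN F (Fm.imp A B) (Fm.imp A' B')
  | not {A A'} : SkP F A A' → SkN F (Fm.not A) (Fm.not A')
  | all {A A'} : SkN F A A' → SkN F (Fm.all A) (Fm.all A')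
  | ex {A B} (f : ℕ) (ts : Tms) : F f →
      SkN F (inst0 A (Tm.func f ts)) B → SkN F (Fm.ex A) B
end

/-- `S'` is a Skolemization of the sequent `S` using fresh function symbols from `F` -/
def SkolemSeq (F : ℕ → Prop) (S S' : List Fm × List Fm) : Prop :=
  List.Forall₂ (SkN F) S.1 S'.1 ∧ List.Forall₂ (SkP F) S.2 S'.2



set_option linter.unusedSimpArgs false

/-! ## Part A: applicative terms and the formulas of the construction -/

/-- applicative terms: the only terms used in the short proofs -/
inductive CT : Type where
  | b : ℕ → CT
  | v : ℕ → CT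
  | app : CT → CT → CT
  | D : CT
  | S : CT
  | Z : CT

namespace CT

def emb : CT → Tm
  | b n => .bvar n
  | v n => .fvar n
  | app s t => .func 0 (.cons (emb s) (.cons (emb t) .nil))
  | D => .func 1 .nil
  | S => .func 2 .nil
  | Z => .func 3 .nil

def lift : CT → CT
  | b n => b (n+1)
  | v n => v n
  | app s t => app (lift s) (lift t)
  | D => D
  | S => S
  | Z => Z

def sub (k : ℕ) (u : CT) : CT → CT
  | b n => if n = k then u else if n < k then b n else b (n-1)
  | v n => v n
  | app s t => app (sub k u s) (sub k u t)
  | D => D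
  | S => S
  | Z => Z

def sz : CT → ℕ
  | b _ => 1
  | v _ => 1
  | app s t => 1 + sz s + sz t
  | D => 1
  | S => 1
  | Z => 1

theorem emb_lift (t : CT) : liftT 0 (emb t) = emb (lift t) := by
  induction t <;> simp_all [emb, lift, liftT, liftTs]

theorem emb_sub (k : ℕ) (u t : CT) : subT k (emb u) (emb t) = emb (sub k u t) := by
  induction t with
  | b n => simp only [emb, sub, subT]; split_ifs <;> simp [emb]
  | _ => simp_all [emb, sub, subT, subTs]

theorem sub_lift (k : ℕ) (u t : CT) : sub (k+1) (lift u) (lift t) = lift (sub k u t) := by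
  induction t with
  | b n =>
    simp only [lift, sub]
    split_ifs <;> simp_all [lift]
    omega
  | _ => simp_all [lift, sub]

theorem sub_zero_lift (u t : CT) : sub 0 u (lift t) = t := by
  induction t with
  | b n => simp [lift, sub]
  | _ => simp_all [lift, sub]

theorem sz_lift (t : CT) : sz (lift t) = sz t := by
  induction t <;> simp_all [lift, sz]

theorem sz_emb (t : CT) : szT (emb t) = sz t := by
  induction t <;> simp_all [emb, sz, szT, szTs]; omega

theorem noEps_emb (t : CT) : noEpsT (emb t) = true := by
  induction t <;> simp_all [emb, noEpsT, noEpsTs]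

end CT

open CT

def fP (t : CT) : Fm := .atom 0 (.cons (emb t) .nil)
def fE (s t : CT) : Fm := .atom 1 (.cons (emb s) (.cons (emb t) .nil))

/-- the hierarchy of cut formulas -/
def fH : ℕ → CT → Fm
  | 0, t => fP t
  | k+1, t => .all (.imp (fH k (b 0)) (fH k (app (lift t) (b 0))))

theorem sub_P (k : ℕ) (u t : CT) : subF k (emb u) (fP t) = fP (sub k u t) := by
  simp [fP, subF, subTs, emb_sub]

theorem sub_E (k : ℕ) (u s t : CT) :
    subF k (emb u) (fE s t) = fE (sub k u s) (sub k u t) := by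
  simp [fE, subF, subTs, emb_sub]

theorem sub_H (n : ℕ) : ∀ (k : ℕ) (u t : CT),
    subF k (emb u) (fH n t) = fH n (sub k u t) := by
  induction n with
  | zero => intro k u t; simp [fH, sub_P]
  | succ n ih =>
    intro k u t
    simp [fH, subF, emb_lift, ih, sub, sub_lift]

/-- the five axioms -/
def ax0 : Fm := fP Z
def ax1 : Fm := fH 1 S
def ax2 : Fm := .all (.all (fE (app (app D (b 1)) (b 0)) (app (b 1) (app (b 1) (b 0)))))
def ax3 : Fm := .all (.all (.all (.imp (fE (b 2) (b 1))
  (fE (app (b 2) (b 0)) (app (b 1) (b 0))))))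
def ax4 : Fm := .all (.all (.imp (fE (b 1) (b 0)) (.imp (fP (b 0)) (fP (b 1)))))

def Ax : List Fm := [ax0, ax1, ax2, ax3, ax4]

/-! ## Part B: provability with size bounds -/

def Pr (C : Fm → Prop) (n : ℕ) (Γ Δ : List Fm) : Prop :=
  ∃ d : Deriv Γ Δ, d.Std ∧ d.size ≤ n ∧ ∀ A ∈ d.cutFms, C A

section

variable {C : Fm → Prop}

theorem Pr.mono {n m : ℕ} {Γ Δ : List Fm} (h : Pr C n Γ Δ) (hm : n ≤ m) : Pr C m Γ Δ := by
  obtain ⟨d, h1, h2, h3⟩ := h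
  exact ⟨d, h1, h2.trans hm, h3⟩

theorem Pr.perm {n : ℕ} {Γ Γ' Δ : List Fm} (h : Pr C n Γ Δ) (p : Γ.Perm Γ') :
    Pr C (n+1) Γ' Δ := by
  obtain ⟨d, h1, h2, h3⟩ := h
  exact ⟨.permL _ _ _ p d, h1, by simpa [Deriv.size] using h2, h3⟩

theorem Pr.weak {n : ℕ} {Γ Δ : List Fm} (h : Pr C n Γ Δ) (A : Fm) :
    Pr C (n+1) (A :: Γ) Δ := by
  obtain ⟨d, h1, h2, h3⟩ := h
  exact ⟨.wL _ _ _ d, h1, by simpa [Deriv.size] using h2, h3⟩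

theorem Pr.contr {n : ℕ} {Γ Δ : List Fm} {A : Fm} (h : Pr C n (A :: A :: Γ) Δ) :
    Pr C (n+1) (A :: Γ) Δ := by
  obtain ⟨d, h1, h2, h3⟩ := h
  exact ⟨.cL _ _ _ d, h1, by simpa [Deriv.size] using h2, h3⟩

theorem Pr.ax (A : Fm) : Pr C 1 [A] [A] :=
  ⟨.ax A, trivial, le_refl _, by simp [Deriv.cutFms]⟩

/-- contract a formula that is already present -/
theorem Pr.drop {n : ℕ} {Γ Δ : List Fm} {A : Fm} (h : Pr C n (A :: Γ) Δ) (hA : A ∈ Γ) :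
    Pr C (n+3) Γ Δ := by
  obtain ⟨s, t, rfl⟩ := List.append_of_mem hA
  have p : (s ++ A :: t).Perm (A :: (s ++ t)) := List.perm_middle
  exact ((h.perm (p.cons A)).contr).perm p.symm

theorem Pr.absorb {Γ Δ : List Fm} : ∀ (Γ₁ : List Fm) {n : ℕ}, Pr C n (Γ₁ ++ Γ) Δ → Γ₁ ⊆ Γ →
    Pr C (n + 3 * Γ₁.length) Γ Δ
  | [], _, h, _ => h
  | A :: Γ₁, n, h, hs => by
    have hA : A ∈ Γ := hs (by simp)
    have h1 : Pr C (n+3) (Γ₁ ++ Γ) Δ := Pr.drop h (by simp [hA])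
    have := Pr.absorb Γ₁ h1 (fun x hx => hs (by simp [hx]))
    exact this.mono (by simp only [List.length_cons]; omega)

theorem Pr.weaks {n : ℕ} {Γ Δ : List Fm} (h : Pr C n Γ Δ) : ∀ Γ' : List Fm,
    Pr C (n + Γ'.length) (Γ' ++ Γ) Δ
  | [] => h
  | A :: Γ' => ((Pr.weaks h Γ').weak A).mono (by simp only [List.length_cons]; omega)

theorem Pr.sub {n : ℕ} {Γ Γ' Δ : List Fm} (h : Pr C n Γ Δ) (hs : Γ ⊆ Γ') :
    Pr C (n + 3 * Γ.length + Γ'.length + 1) Γ' Δ :=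
  (Pr.absorb Γ ((h.weaks Γ').perm List.perm_append_comm) hs).mono (by omega)

theorem Pr.allL {n : ℕ} {Γ Δ : List Fm} {A : Fm} (t : Tm) (hA : Fm.all A ∈ Γ)
    (h : Pr C n (inst0 A t :: Γ) Δ) : Pr C (n+4) Γ Δ := by
  obtain ⟨d, h1, h2, h3⟩ := h
  have : Pr C (n+1) (Fm.all A :: Γ) Δ :=
    ⟨.allL t _ _ _ d, h1, by simpa [Deriv.size] using h2, h3⟩
  exact this.drop hA

theorem Pr.impL {n m : ℕ} {Γ₁ Γ Δ : List Fm} {A B : Fm} (hA : Fm.imp A B ∈ Γ) (hs : Γ₁ ⊆ Γ)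
    (h : Pr C n Γ₁ [A]) (h' : Pr C m (B :: Γ) Δ) :
    Pr C (n + m + 4 + 3 * Γ₁.length) Γ Δ := by
  obtain ⟨d, h1, h2, h3⟩ := h
  obtain ⟨e, e1, e2, e3⟩ := h'
  have : Pr C (n+m+1) (Fm.imp A B :: (Γ₁ ++ Γ)) Δ := by
    refine ⟨.impL A B Γ₁ [] Γ Δ d e, ⟨h1, e1⟩, by simp only [Deriv.size]; omega, ?_⟩
    simp only [Deriv.cutFms, List.mem_append]
    rintro X (hX | hX)
    · exact h3 X hX
    · exact e3 X hX
  exact ((this.drop (by simp [hA])).absorb _ hs).mono (by omega)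

theorem Pr.mp {m : ℕ} {Γ Δ : List Fm} {A B : Fm} (hA : Fm.imp A B ∈ Γ) (hs : A ∈ Γ)
    (h' : Pr C m (B :: Γ) Δ) : Pr C (m + 8) Γ Δ :=
  (Pr.impL hA (by simpa using hs) (Pr.ax A) h').mono (by simp only [List.length_cons, List.length_nil]; omega)

theorem Pr.impR {n : ℕ} {Γ : List Fm} {A B : Fm} (h : Pr C n (A :: Γ) [B]) :
    Pr C (n+1) Γ [Fm.imp A B] := by
  obtain ⟨d, h1, h2, h3⟩ := h
  exact ⟨.impR _ _ _ _ d, h1, by simpa [Deriv.size] using h2, h3⟩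

theorem Pr.allR {n : ℕ} {Γ : List Fm} {A : Fm}
    (h : ∀ a : ℕ, Pr C n Γ [inst0 A (Tm.fvar a)]) :
    Pr C (n+1) Γ [Fm.all A] := by
  obtain ⟨a, ha⟩ := Infinite.exists_notMem_finset (fvSeq Γ [Fm.all A]).toFinset
  obtain ⟨d, h1, h2, h3⟩ := h a
  exact ⟨.allR a _ _ _ d, ⟨by simpa using ha, h1⟩, by simpa [Deriv.size] using h2, h3⟩

theorem Pr.cut {n m : ℕ} {Γ Δ : List Fm} {A : Fm} (hC : C A)
    (h : Pr C n Γ [A]) (h' : Pr C m (A :: Γ) Δ) :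
    Pr C (n + m + 1 + 3 * Γ.length) Γ Δ := by
  obtain ⟨d, h1, h2, h3⟩ := h
  obtain ⟨e, e1, e2, e3⟩ := h'
  have : Pr C (n+m+1) (Γ ++ Γ) Δ := by
    refine ⟨.cut A Γ [] Γ Δ d e, ⟨h1, e1⟩, by simp only [Deriv.size]; omega, ?_⟩
    simp only [Deriv.cutFms, List.mem_append, List.mem_cons]
    rintro X (rfl | hX | hX)
    · exact hC
    · exact h3 X hX
    · exact e3 X hX
  exact this.absorb _ (List.Subset.refl _)

/-! ### instances of the formulas -/

theorem inst_H (k : ℕ) (t u : CT) :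
    inst0 (.imp (fH k (b 0)) (fH k (app (lift t) (b 0)))) (emb u)
      = .imp (fH k u) (fH k (app t u)) := by
  simp [inst0, subF, sub_H, CT.sub, sub_zero_lift]

theorem Pr.useH {n : ℕ} {Γ Δ : List Fm} {k : ℕ} {t : CT} (u : CT) (h1 : fH (k+1) t ∈ Γ)
    (h : Pr C n (.imp (fH k u) (fH k (app t u)) :: Γ) Δ) : Pr C (n+4) Γ Δ := by
  rw [← inst_H] at h
  exact Pr.allL _ h1 h

theorem Pr.mpH {n : ℕ} {Γ Δ : List Fm} {k : ℕ} {t u : CT} (h1 : fH (k+1) t ∈ Γ)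
    (h2 : fH k u ∈ Γ)
    (h : Pr C n (fH k (app t u) :: Γ) Δ) : Pr C (n+14) Γ Δ := by
  refine (Pr.useH (n := n + 10) u h1 ?_).mono (by omega)
  refine (Pr.mp (A := fH k u) (B := fH k (app t u)) (m := n+2) (by simp) (by simp [h2]) ?_).mono (by omega)
  exact (h.weak (.imp (fH k u) (fH k (app t u)))).perm (List.Perm.swap _ _ _)

theorem inst_ax2 {n : ℕ} {Γ Δ : List Fm} (f x : CT) (h1 : ax2 ∈ Γ)
    (h : Pr C n (fE (app (app D f) x) (app f (app f x)) :: Γ) Δ) : Pr C (n+10) Γ Δ := by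
  refine (Pr.allL (n := n + 6) (emb f) h1 ?_).mono (by omega)
  simp only [inst0, subF, sub_E, emb_lift]
  refine (Pr.allL (n := n + 2) (emb x) List.mem_cons_self ?_).mono (by omega)
  simp only [inst0, sub_E]
  refine Pr.perm (n := n+1) ?_ (List.Perm.swap _ _ _)
  refine Pr.weak ?_ _
  simpa [CT.sub, sub_zero_lift] using h

theorem inst_ax3 {n : ℕ} {Γ Δ : List Fm} (u v x : CT) (h1 : ax3 ∈ Γ) (h2 : fE u v ∈ Γ)
    (h : Pr C n (fE (app u x) (app v x) :: Γ) Δ) : Pr C (n+24) Γ Δ := by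
  refine (Pr.allL (n := n + 20) (emb u) h1 ?_).mono (by omega)
  simp only [inst0, subF, sub_E, emb_lift]
  refine (Pr.allL (n := n + 16) (emb v) List.mem_cons_self ?_).mono (by omega)
  simp only [inst0, subF, sub_E, emb_lift]
  refine (Pr.allL (n := n + 12) (emb x) List.mem_cons_self ?_).mono (by omega)
  have e : ∀ w y : CT, CT.sub 1 (lift w) (lift (lift y)) = lift y := by
    intro w y; rw [sub_lift, sub_zero_lift]
  simp only [inst0, subF, sub_E]
  simp [CT.sub, sub_zero_lift, e]
  refine (Pr.mp (m := n + 4) (A := fE u v) List.mem_cons_self (by simp [h2]) ?_)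
  exact (Pr.perm (((h.weak _).weak _).weak _) (List.perm_append_comm (l₁ := [_, _, _]) (l₂ := [_])|>.append_right Γ))

theorem inst_ax4 {n : ℕ} {Γ Δ : List Fm} (u v : CT) (h1 : ax4 ∈ Γ) (h2 : fE u v ∈ Γ)
    (h3 : fP v ∈ Γ)
    (h : Pr C n (fP u :: Γ) Δ) : Pr C (n+28) Γ Δ := by
  refine (Pr.allL (n := n + 24) (emb u) h1 ?_).mono (by omega)
  simp only [inst0, subF, sub_E, sub_P, emb_lift]
  refine (Pr.allL (n := n + 20) (emb v) List.mem_cons_self ?_).mono (by omega)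
  simp only [inst0, subF, sub_E, sub_P]
  simp [CT.sub, sub_zero_lift]
  refine (Pr.mp (m := n + 12) (A := fE u v) List.mem_cons_self (by simp [h2]) ?_)
  refine (Pr.mp (m := n + 4) (A := fP v) List.mem_cons_self (by simp [h3]) ?_)
  exact (Pr.perm (((h.weak _).weak _).weak _) (List.perm_append_comm (l₁ := [_, _, _]) (l₂ := [_])|>.append_right Γ))

theorem Pr.ax' {Γ : List Fm} (A : Fm) (h : A ∈ Γ) : Pr C (5 + Γ.length) Γ [A] :=
  ((Pr.ax A).sub (by simpa using h)).mono (by simp only [List.length_cons, List.length_nil]; omega)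

/-- expansion: `H_k` is closed under `E` -/
theorem lem_E (k : ℕ) : ∀ u v : CT, Pr C (100 * (k+1)) (fE u v :: fH k v :: Ax) [fH k u] := by
  induction k with
  | zero =>
    intro u v
    refine (inst_ax4 (n := 13) u v (by simp [Ax]) (by simp) (by simp [fH]) ?_).mono (by omega)
    exact Pr.ax' _ (by simp [fH])
  | succ k ih =>
    intro u v
    refine (Pr.allR (n := 100 * (k+1) + 99) fun a => ?_).mono (by omega)
    have := inst_H k u (CT.v a)
    rw [show Tm.fvar a = emb (CT.v a) from rfl, this]
    refine Pr.impR (n := 100 * (k+1) + 98) ?_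
    refine (Pr.mpH (n := 100 * (k+1) + 84) (k := k) (t := v) (u := CT.v a) (by simp) (by simp) ?_)
    refine (inst_ax3 (n := 100 * (k+1) + 60) u v (CT.v a) (by simp [Ax]) (by simp) ?_)
    refine ((ih (app u (CT.v a)) (app v (CT.v a))).sub ?_).mono ?_
    · intro x hx
      simp only [List.mem_cons] at hx ⊢
      tauto
    · simp [Ax]

/-- the doubling combinator belongs to every level -/
theorem lem_D (k : ℕ) : Pr C (100 * (k+2)) Ax [fH (k+2) D] := by
  refine (Pr.allR (n := 100 * (k+1) + 99) fun f => ?_).mono (by omega)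
  have := inst_H (k+1) D (CT.v f)
  rw [show Tm.fvar f = emb (CT.v f) from rfl, this]
  refine Pr.impR (n := 100 * (k+1) + 98) ?_
  refine (Pr.allR (n := 100 * (k+1) + 97) fun x => ?_)
  have := inst_H k (app D (CT.v f)) (CT.v x)
  rw [show Tm.fvar x = emb (CT.v x) from rfl, this]
  refine Pr.impR (n := 100 * (k+1) + 96) ?_
  refine (Pr.mpH (n := 100 * (k+1) + 82) (k := k) (t := CT.v f) (u := CT.v x)
    (by simp) (by simp) ?_)
  refine (Pr.mpH (n := 100 * (k+1) + 68) (k := k) (t := CT.v f) (u := app (CT.v f) (CT.v x))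
    (by simp) (by simp) ?_)
  refine inst_ax2 (n := 100 * (k+1) + 58) (CT.v f) (CT.v x) (by simp [Ax]) ?_
  refine ((lem_E k _ (app (CT.v f) (app (CT.v f) (CT.v x)))).sub ?_).mono ?_
  · intro x hx
    simp only [List.mem_cons] at hx ⊢
    tauto
  · simp [Ax]

/-- `chain j T = T D ... D S Z` with `j` occurrences of `D` after `T` -/
def chain : ℕ → CT → CT
  | 0, T => app (app T S) Z
  | j+1, T => chain j (app T D)

theorem lem_chain (j : ℕ) : ∀ T : CT,
    Pr C (100 * (j+1)^2) (fH (j+2) T :: Ax) [fP (chain j T)] := by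
  induction j with
  | zero =>
    intro T
    refine (Pr.mpH (n := 60) (k := 1) (t := T) (u := S) (by simp)
      (by simp [Ax, ax1]) ?_).mono (by omega)
    refine (Pr.mpH (n := 46) (k := 0) (t := app T S) (u := Z) (by simp)
      (by simp [Ax, ax0, fH]) ?_).mono (by omega)
    exact (Pr.ax' _ (by simp [fH, chain])).mono (by simp [Ax])
  | succ j ih =>
    intro T
    refine (Pr.useH (n := 100 * (j+2) + (100 * (j+1)^2 + 50) + 4 + 3 * Ax.length) (k := j+2)
      (t := T) D (by simp) ?_).mono (by simp [Ax]; nlinarith)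
    refine Pr.impL (A := fH (j+2) D) List.mem_cons_self ?_ (lem_D j) ?_
    · intro x hx
      simp only [List.mem_cons]
      tauto
    · refine ((ih (app T D)).sub ?_).mono (by simp [Ax])
      intro x hx
      simp only [List.mem_cons] at hx ⊢
      tauto

end

/-- the tautological universal formula for the cut formula -/
def taut (n : ℕ) : Fm :=
  uclose (.imp (matrix (fH (n+2) D)) (matrix (fH (n+2) D)))

def seqL (n : ℕ) : List Fm := taut n :: Ax
def seqR (n : ℕ) : List Fm := [fP (chain n D)]

theorem upper (n : ℕ) :
    Pr (fun A => A = fH (n+2) D) (1000 * (n+1)^2) (seqL n) (seqR n) := by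
  refine ((Pr.cut (C := fun A => A = fH (n+2) D) rfl (lem_D n) (lem_chain n D)).weak (taut n)).mono ?_
  simp [Ax]; nlinarith

/-! ## Part C: the lower bound -/

/-- number of connectives and quantifiers -/
def cx : Fm → ℕ
  | .atom _ _ => 0
  | .and A B => cx A + cx B + 1
  | .or A B => cx A + cx B + 1
  | .imp A B => cx A + cx B + 1
  | .not A => cx A + 1
  | .all A => cx A + 1
  | .ex A => cx A + 1

theorem cx_sub : ∀ (A : Fm) (k : ℕ) (u : Tm), cx (subF k u A) = cx A
  | .atom _ _, _, _ => by simp [subF, cx]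
  | .and A B, k, u => by simp [subF, cx, cx_sub A, cx_sub B]
  | .or A B, k, u => by simp [subF, cx, cx_sub A, cx_sub B]
  | .imp A B, k, u => by simp [subF, cx, cx_sub A, cx_sub B]
  | .not A, k, u => by simp [subF, cx, cx_sub A]
  | .all A, k, u => by simp [subF, cx, cx_sub A]
  | .ex A, k, u => by simp [subF, cx, cx_sub A]

theorem W_sub : ∀ (A : Fm) (k : ℕ) (u : Tm),
    posW (subF k u A) = posW A ∧ negW (subF k u A) = negW A
  | .atom _ _, _, _ => by simp [subF, posW, negW]
  | .and A B, k, u => by simp [subF, posW, negW, W_sub A, W_sub B]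
  | .or A B, k, u => by simp [subF, posW, negW, W_sub A, W_sub B]
  | .imp A B, k, u => by simp [subF, posW, negW, W_sub A, W_sub B]
  | .not A, k, u => by simp [subF, posW, negW, W_sub A]
  | .all A, k, u => by simp [subF, posW, negW, W_sub A]
  | .ex A, k, u => by simp [subF, posW, negW, W_sub A]

/-- truth of a formula where quantifiers range over the terms in the list `T` -/
def ev (v : ℕ → Tms → Prop) (T : List Tm) : Fm → Prop
  | .atom p ts => v p ts
  | .and A B => ev v T A ∧ ev v T B
  | .or A B => ev v T A ∨ ev v T B
  | .imp A B => ev v T A → ev v T B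
  | .not A => ¬ ev v T A
  | .all A => ∀ t ∈ T, ev v T (inst0 A t)
  | .ex A => ∃ t ∈ T, ev v T (inst0 A t)
termination_by A => cx A
decreasing_by all_goals (simp [cx, inst0, cx_sub]; try omega)

def AllP (p : Fm → Prop) (Γ : List Fm) : Prop := ∀ A ∈ Γ, p A
def SomeP (p : Fm → Prop) (Γ : List Fm) : Prop := ∃ A ∈ Γ, p A

theorem AllP_cons (p : Fm → Prop) (A : Fm) (Γ : List Fm) :
    AllP p (A :: Γ) ↔ p A ∧ AllP p Γ := by simp [AllP]
theorem AllP_append (p : Fm → Prop) (Γ Δ : List Fm) :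
    AllP p (Γ ++ Δ) ↔ AllP p Γ ∧ AllP p Δ := by
  simp [AllP, or_imp, forall_and]
theorem SomeP_cons (p : Fm → Prop) (A : Fm) (Γ : List Fm) :
    SomeP p (A :: Γ) ↔ p A ∨ SomeP p Γ := by simp [SomeP]
theorem SomeP_append (p : Fm → Prop) (Γ Δ : List Fm) :
    SomeP p (Γ ++ Δ) ↔ SomeP p Γ ∨ SomeP p Δ := by
  simp [SomeP, or_and_right, exists_or]
theorem AllP_perm {p : Fm → Prop} {Γ Δ : List Fm} (h : Γ.Perm Δ) :
    AllP p Γ ↔ AllP p Δ := by simp [AllP, h.mem_iff]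
theorem SomeP_perm {p : Fm → Prop} {Γ Δ : List Fm} (h : Γ.Perm Δ) :
    SomeP p Γ ↔ SomeP p Δ := by simp [SomeP, h.mem_iff]

/-- Herbrand-style soundness of cut-free derivations of weak sequents -/
theorem herbrand {Γ Δ : List Fm} (d : Deriv Γ Δ) : d.cutFms = [] →
    AllP (fun A => negW A = true) Γ ∧ AllP (fun A => posW A = true) Δ →
    ∃ L : List Tm, L.length ≤ d.size ∧ ∀ (v : ℕ → Tms → Prop) (T : List Tm), L ⊆ T →
      AllP (ev v T) Γ → SomeP (ev v T) Δ := by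
  induction d with
  | ax A =>
    intro _ _
    refine ⟨[], by simp, fun v T _ h => ?_⟩
    simp only [AllP_cons, SomeP_cons] at h ⊢
    exact Or.inl h.1
  | andL A B Γ Δ d ih =>
    intro hc hw
    simp only [AllP_cons, posW, negW, Bool.and_eq_true] at hw ih
    obtain ⟨L, h1, h2⟩ := ih hc (by clear ih; tauto)
    refine ⟨L, by simp only [Deriv.size]; omega, fun v T hT h => ?_⟩
    have h3 := h2 v T hT
    clear h2 hw ih
    simp only [SomeP_cons, AllP_cons, ev] at h h3 ⊢
    tauto
  | orR A B Γ Δ d ih =>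
    intro hc hw
    simp only [AllP_cons, posW, negW, Bool.and_eq_true] at hw ih
    obtain ⟨L, h1, h2⟩ := ih hc (by clear ih; tauto)
    refine ⟨L, by simp only [Deriv.size]; omega, fun v T hT h => ?_⟩
    have h3 := h2 v T hT
    clear h2 hw ih
    simp only [SomeP_cons, AllP_cons, ev] at h h3 ⊢
    tauto
  | impR A B Γ Δ d ih =>
    intro hc hw
    simp only [AllP_cons, posW, negW, Bool.and_eq_true] at hw ih
    obtain ⟨L, h1, h2⟩ := ih hc (by clear ih; tauto)
    refine ⟨L, by simp only [Deriv.size]; omega, fun v T hT h => ?_⟩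
    have h3 := h2 v T hT
    clear h2 hw ih
    simp only [SomeP_cons, AllP_cons, ev] at h h3 ⊢
    tauto
  | notL A Γ Δ d ih =>
    intro hc hw
    simp only [AllP_cons, posW, negW, Bool.and_eq_true] at hw ih
    obtain ⟨L, h1, h2⟩ := ih hc (by clear ih; tauto)
    refine ⟨L, by simp only [Deriv.size]; omega, fun v T hT h => ?_⟩
    have h3 := h2 v T hT
    clear h2 hw ih
    simp only [SomeP_cons, AllP_cons, ev] at h h3 ⊢
    tauto
  | notR A Γ Δ d ih =>
    intro hc hw
    simp only [AllP_cons, posW, negW, Bool.and_eq_true] at hw ih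
    obtain ⟨L, h1, h2⟩ := ih hc (by clear ih; tauto)
    refine ⟨L, by simp only [Deriv.size]; omega, fun v T hT h => ?_⟩
    have h3 := h2 v T hT
    clear h2 hw ih
    simp only [SomeP_cons, AllP_cons, ev] at h h3 ⊢
    tauto
  | wL A Γ Δ d ih =>
    intro hc hw
    simp only [AllP_cons, posW, negW, Bool.and_eq_true] at hw ih
    obtain ⟨L, h1, h2⟩ := ih hc (by clear ih; tauto)
    refine ⟨L, by simp only [Deriv.size]; omega, fun v T hT h => ?_⟩
    have h3 := h2 v T hT
    clear h2 hw ih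
    simp only [SomeP_cons, AllP_cons, ev] at h h3 ⊢
    tauto
  | wR A Γ Δ d ih =>
    intro hc hw
    simp only [AllP_cons, posW, negW, Bool.and_eq_true] at hw ih
    obtain ⟨L, h1, h2⟩ := ih hc (by clear ih; tauto)
    refine ⟨L, by simp only [Deriv.size]; omega, fun v T hT h => ?_⟩
    have h3 := h2 v T hT
    clear h2 hw ih
    simp only [SomeP_cons, AllP_cons, ev] at h h3 ⊢
    tauto
  | cL A Γ Δ d ih =>
    intro hc hw
    simp only [AllP_cons, posW, negW, Bool.and_eq_true] at hw ih
    obtain ⟨L, h1, h2⟩ := ih hc (by clear ih; tauto)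
    refine ⟨L, by simp only [Deriv.size]; omega, fun v T hT h => ?_⟩
    have h3 := h2 v T hT
    clear h2 hw ih
    simp only [SomeP_cons, AllP_cons, ev] at h h3 ⊢
    tauto
  | cR A Γ Δ d ih =>
    intro hc hw
    simp only [AllP_cons, posW, negW, Bool.and_eq_true] at hw ih
    obtain ⟨L, h1, h2⟩ := ih hc (by clear ih; tauto)
    refine ⟨L, by simp only [Deriv.size]; omega, fun v T hT h => ?_⟩
    have h3 := h2 v T hT
    clear h2 hw ih
    simp only [SomeP_cons, AllP_cons, ev] at h h3 ⊢
    tauto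
  | andR A B Γ₁ Δ₁ Γ₂ Δ₂ d e ih1 ih2 =>
    intro hc hw
    simp only [Deriv.cutFms, List.append_eq_nil_iff] at hc
    simp only [AllP_cons, AllP_append, posW, negW, Bool.and_eq_true] at hw ih1 ih2
    obtain ⟨L, h1, h2⟩ := ih1 hc.1 (by clear ih1 ih2; tauto)
    obtain ⟨L', h1', h2'⟩ := ih2 hc.2 (by clear ih1 ih2; tauto)
    refine ⟨L ++ L', by simp only [Deriv.size, List.length_append]; omega, fun v T hT h => ?_⟩
    have a1 := h2 v T (fun x hx => hT (by simp [hx]))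
    have a2 := h2' v T (fun x hx => hT (by simp [hx]))
    clear h2 h2' hw ih1 ih2
    simp only [SomeP_cons, SomeP_append, AllP_cons, AllP_append, ev] at h a1 a2 ⊢
    tauto
  | orL A B Γ₁ Δ₁ Γ₂ Δ₂ d e ih1 ih2 =>
    intro hc hw
    simp only [Deriv.cutFms, List.append_eq_nil_iff] at hc
    simp only [AllP_cons, AllP_append, posW, negW, Bool.and_eq_true] at hw ih1 ih2
    obtain ⟨L, h1, h2⟩ := ih1 hc.1 (by clear ih1 ih2; tauto)
    obtain ⟨L', h1', h2'⟩ := ih2 hc.2 (by clear ih1 ih2; tauto)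
    refine ⟨L ++ L', by simp only [Deriv.size, List.length_append]; omega, fun v T hT h => ?_⟩
    have a1 := h2 v T (fun x hx => hT (by simp [hx]))
    have a2 := h2' v T (fun x hx => hT (by simp [hx]))
    clear h2 h2' hw ih1 ih2
    simp only [SomeP_cons, SomeP_append, AllP_cons, AllP_append, ev] at h a1 a2 ⊢
    tauto
  | impL A B Γ₁ Δ₁ Γ₂ Δ₂ d e ih1 ih2 =>
    intro hc hw
    simp only [Deriv.cutFms, List.append_eq_nil_iff] at hc
    simp only [AllP_cons, AllP_append, posW, negW, Bool.and_eq_true] at hw ih1 ih2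
    obtain ⟨L, h1, h2⟩ := ih1 hc.1 (by clear ih1 ih2; tauto)
    obtain ⟨L', h1', h2'⟩ := ih2 hc.2 (by clear ih1 ih2; tauto)
    refine ⟨L ++ L', by simp only [Deriv.size, List.length_append]; omega, fun v T hT h => ?_⟩
    have a1 := h2 v T (fun x hx => hT (by simp [hx]))
    have a2 := h2' v T (fun x hx => hT (by simp [hx]))
    clear h2 h2' hw ih1 ih2
    simp only [SomeP_cons, SomeP_append, AllP_cons, AllP_append, ev] at h a1 a2 ⊢
    tauto
  | cut A Γ₁ Δ₁ Γ₂ Δ₂ d e ih1 ih2 =>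
    intro hc
    simp [Deriv.cutFms] at hc
  | allL t A Γ Δ d ih =>
    intro hc hw
    obtain ⟨L, h1, h2⟩ := ih hc (by simpa only [AllP_cons, negW, inst0, W_sub] using hw)
    refine ⟨t :: L, by simp only [Deriv.size, List.length_cons]; omega, fun v T hT h => ?_⟩
    simp at hT
    refine h2 v T hT.2 ?_
    simp only [AllP_cons, ev] at h ⊢
    exact ⟨h.1 t hT.1, h.2⟩
  | allR a A Γ Δ d ih =>
    intro hc hw
    simp [AllP_cons, posW] at hw
  | exL a A Γ Δ d ih =>
    intro hc hw
    simp [AllP_cons, negW] at hw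
  | exR t A Γ Δ d ih =>
    intro hc hw
    obtain ⟨L, h1, h2⟩ := ih hc (by simpa only [AllP_cons, posW, inst0, W_sub] using hw)
    refine ⟨t :: L, by simp only [Deriv.size, List.length_cons]; omega, fun v T hT h => ?_⟩
    simp at hT
    have := h2 v T hT.2 h
    simp only [SomeP_cons, ev] at this ⊢
    rcases this with h | h
    · exact Or.inl ⟨t, hT.1, h⟩
    · exact Or.inr h
  | permL Γ Γ' Δ p d ih =>
    intro hc hw
    rw [AllP_perm p] at ih
    obtain ⟨L, h1, h2⟩ := ih hc hw
    exact ⟨L, by simp only [Deriv.size]; omega, fun v T hT h =>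
      h2 v T hT ((AllP_perm p).2 h)⟩
  | permR Γ Δ Δ' p d ih =>
    intro hc hw
    rw [AllP_perm p] at ih
    obtain ⟨L, h1, h2⟩ := ih hc hw
    exact ⟨L, by simp only [Deriv.size]; omega, fun v T hT h =>
      (SomeP_perm p).1 (h2 v T hT h)⟩

/-! ### the model -/

/-- the pure type hierarchy over `ℕ` -/
def X : ℕ → Type
  | 0 => ℕ
  | k+1 => X k → X k

def junk : ∀ k, X k
  | 0 => (0 : ℕ)
  | _+1 => fun x => x

def M : Type := ∀ k, X k

def appM (f x : M) : M := fun k => (f (k+1) : X k → X k) (x k)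

def dbl (k : ℕ) (f : X (k+1)) : X (k+1) := fun x => (f : X k → X k) ((f : X k → X k) x)

def DM : M
  | 0 => junk 0
  | 1 => junk 1
  | k+2 => dbl k

def SM : M
  | 0 => junk 0
  | 1 => fun x : ℕ => x + 1
  | k+2 => junk (k+2)

def interp : ℕ → List M → M
  | 0, [f, x] => appM f x
  | 1, [] => DM
  | 2, [] => SM
  | _, _ => junk

mutual
def valT : Tm → M
  | .bvar _ => junk
  | .fvar _ => junk
  | .func f ts => interp f (valTs ts)
  | .eps _ => junk
def valTs : Tms → List M
  | .nil => []
  | .cons t ts => valT t :: valTs ts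
end

def toNat (x : M) : ℕ := x 0

theorem appM_D (f x : M) : appM (appM DM f) x = appM f (appM f x) := rfl

theorem appM_S (x : M) : toNat (appM SM x) = toNat x + 1 := rfl

def itM (c : ℕ) (T : M) : Prop := ∀ k, ∀ f : X (k+1),
  (T (k+2) : X (k+1) → X (k+1)) f = (Nat.iterate (f : X k → X k) c : X k → X k)

theorem itM_D : itM 2 DM := fun _ _ => rfl

theorem dbl_iter (k c : ℕ) (f : X (k+1)) :
    Nat.iterate (dbl k) c f = (Nat.iterate (f : X k → X k) (2^c) : X k → X k) := by
  induction c generalizing f with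
  | zero => rfl
  | succ c ih =>
    rw [Function.iterate_succ_apply, ih, pow_succ, mul_comm]
    exact (Function.iterate_mul (f : X k → X k) 2 (2^c)).symm

theorem itM_app {c : ℕ} {T : M} (h : itM c T) : itM (2^c) (appM T DM) := by
  intro k f
  have h1 := h (k+1) (dbl k)
  have h2 : (appM T DM) (k+2) = (T (k+3) : X (k+2) → X (k+2)) (dbl k) := rfl
  rw [h2, h1]
  exact dbl_iter k c f

theorem succ_iter (c : ℕ) : Nat.iterate (fun x : ℕ => x + 1) c 0 = c := by
  induction c with
  | zero => rfl
  | succ c ih => rw [Function.iterate_succ_apply', ih]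

theorem val_app (s t : CT) : valT (emb (app s t)) = appM (valT (emb s)) (valT (emb t)) := rfl

theorem itM_chain (j : ℕ) : ∀ (c : ℕ) (T : CT), itM c (valT (emb T)) →
    toNat (valT (emb (chain j T))) = iterExp j c := by
  induction j with
  | zero =>
    intro c T h
    have h1 := h 0 (SM 1)
    have h2 : toNat (valT (emb (chain 0 T))) =
      (show ℕ → ℕ from (valT (emb T) 2 : X 1 → X 1) (SM 1)) 0 := rfl
    rw [h2, h1]
    exact succ_iter c
  | succ j ih =>
    intro c T h
    have := ih _ (app T D) (itM_app h)
    simp only [chain, this]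
    clear * -
    induction j with
    | zero => rfl
    | succ j ih => simp only [iterExp] at ih ⊢; rw [ih]

/-! ### universally closed tautologies -/

def Tau : ℕ → Fm → Prop
  | 0, A => ∃ B, A = .imp B B
  | n+1, A => ∃ B, A = .all B ∧ Tau n B

theorem Tau_sub (n : ℕ) : ∀ (A : Fm) (k : ℕ) (u : Tm), Tau n A → Tau n (subF k u A) := by
  induction n with
  | zero => rintro A k u ⟨B, rfl⟩; exact ⟨_, rfl⟩
  | succ n ih => rintro A k u ⟨B, rfl, h⟩; exact ⟨_, rfl, ih _ _ _ h⟩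

theorem Tau_ab (n : ℕ) : ∀ (A : Fm) (a k : ℕ), Tau n A → Tau n (abF a k A) := by
  induction n with
  | zero => rintro A a k ⟨B, rfl⟩; exact ⟨_, rfl⟩
  | succ n ih => rintro A a k ⟨B, rfl, h⟩; exact ⟨_, rfl, ih _ _ _ h⟩

theorem Tau_ev (v : ℕ → Tms → Prop) (T : List Tm) (n : ℕ) : ∀ A : Fm, Tau n A → ev v T A := by
  induction n with
  | zero => rintro A ⟨B, rfl⟩; simp only [ev]; exact id
  | succ n ih =>
    rintro A ⟨B, rfl, h⟩
    simp only [ev]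
    exact fun t _ => ih _ (Tau_sub _ _ _ _ h)

theorem Tau_uclose (B : Fm) : ∃ n, Tau n (uclose (.imp B B)) := by
  unfold uclose
  induction (fvF (.imp B B)).dedup with
  | nil => exact ⟨0, B, rfl⟩
  | cons a l ih =>
    obtain ⟨n, h⟩ := ih
    exact ⟨n+1, _, rfl, Tau_ab _ _ _ _ h⟩

/-! ### syntactic properties of the sequents -/

theorem W_ab : ∀ (A : Fm) (a k : ℕ), posW (abF a k A) = posW A ∧ negW (abF a k A) = negW A
  | .atom _ _, _, _ => by simp [abF, posW, negW]
  | .and A B, k, u => by simp [abF, posW, negW, W_ab A, W_ab B]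
  | .or A B, k, u => by simp [abF, posW, negW, W_ab A, W_ab B]
  | .imp A B, k, u => by simp [abF, posW, negW, W_ab A, W_ab B]
  | .not A, k, u => by simp [abF, posW, negW, W_ab A]
  | .all A, k, u => by simp [abF, posW, negW, W_ab A]
  | .ex A, k, u => by simp [abF, posW, negW, W_ab A]

theorem W_mx : ∀ (A : Fm) (a k : ℕ), posW (mxF a k A) = true ∧ negW (mxF a k A) = true
  | .atom _ _, _, _ => by simp [mxF, posW, negW]
  | .and A B, k, u => by simp [mxF, posW, negW, W_mx A, W_mx B]
  | .or A B, k, u => by simp [mxF, posW, negW, W_mx A, W_mx B]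
  | .imp A B, k, u => by simp [mxF, posW, negW, W_mx A, W_mx B]
  | .not A, k, u => by simp [mxF, posW, negW, W_mx A]
  | .all A, k, u => by simp [mxF, W_mx A]
  | .ex A, k, u => by simp [mxF, W_mx A]

theorem W_uclose (A : Fm) (h : negW A = true) : negW (uclose A) = true := by
  unfold uclose
  induction (fvF A).dedup with
  | nil => exact h
  | cons a l ih => simp [negW, W_ab, ih]

mutual
theorem ne_abT : ∀ (t : Tm) (a k : ℕ), noEpsT t = true → noEpsT (abT a k t) = true
  | .bvar _, _, _, _ => by simp [abT, noEpsT]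
  | .fvar _, _, _, _ => by simp only [abT]; split_ifs <;> simp [noEpsT]
  | .func f ts, a, k, h => by
    simp only [abT, noEpsT] at h ⊢; exact ne_abTs ts a k h
  | .eps A, _, _, h => by simp [noEpsT] at h
theorem ne_abTs : ∀ (ts : Tms) (a k : ℕ), noEpsTs ts = true → noEpsTs (abTs a k ts) = true
  | .nil, _, _, _ => by simp [abTs, noEpsTs]
  | .cons t ts, a, k, h => by
    simp only [abTs, noEpsTs, Bool.and_eq_true] at h ⊢
    exact ⟨ne_abT t a k h.1, ne_abTs ts a k h.2⟩
end

theorem ne_abF : ∀ (A : Fm) (a k : ℕ), noEpsF A = true → noEpsF (abF a k A) = true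
  | .atom _ ts, a, k, h => by simp only [abF, noEpsF] at h ⊢; exact ne_abTs ts a k h
  | .and A B, a, k, h => by
    simp only [abF, noEpsF, Bool.and_eq_true] at h ⊢; exact ⟨ne_abF A a k h.1, ne_abF B a k h.2⟩
  | .or A B, a, k, h => by
    simp only [abF, noEpsF, Bool.and_eq_true] at h ⊢; exact ⟨ne_abF A a k h.1, ne_abF B a k h.2⟩
  | .imp A B, a, k, h => by
    simp only [abF, noEpsF, Bool.and_eq_true] at h ⊢; exact ⟨ne_abF A a k h.1, ne_abF B a k h.2⟩
  | .not A, a, k, h => by simp only [abF, noEpsF] at h ⊢; exact ne_abF A a k h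
  | .all A, a, k, h => by simp only [abF, noEpsF] at h ⊢; exact ne_abF A a _ h
  | .ex A, a, k, h => by simp only [abF, noEpsF] at h ⊢; exact ne_abF A a _ h

mutual
theorem ne_mxT : ∀ (t : Tm) (a k : ℕ), noEpsT t = true → noEpsT (mxT a k t) = true
  | .bvar _, _, _, _ => by simp only [mxT]; split_ifs <;> simp [noEpsT]
  | .fvar _, _, _, _ => by simp [mxT, noEpsT]
  | .func f ts, a, k, h => by
    simp only [mxT, noEpsT] at h ⊢; exact ne_mxTs ts a k h
  | .eps A, _, _, h => by simp [noEpsT] at h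
theorem ne_mxTs : ∀ (ts : Tms) (a k : ℕ), noEpsTs ts = true → noEpsTs (mxTs a k ts) = true
  | .nil, _, _, _ => by simp [mxTs, noEpsTs]
  | .cons t ts, a, k, h => by
    simp only [mxTs, noEpsTs, Bool.and_eq_true] at h ⊢
    exact ⟨ne_mxT t a k h.1, ne_mxTs ts a k h.2⟩
end

theorem ne_mxF : ∀ (A : Fm) (a k : ℕ), noEpsF A = true → noEpsF (mxF a k A) = true
  | .atom _ ts, a, k, h => by simp only [mxF, noEpsF] at h ⊢; exact ne_mxTs ts a k h
  | .and A B, a, k, h => by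
    simp only [mxF, noEpsF, Bool.and_eq_true] at h ⊢; exact ⟨ne_mxF A a k h.1, ne_mxF B a k h.2⟩
  | .or A B, a, k, h => by
    simp only [mxF, noEpsF, Bool.and_eq_true] at h ⊢; exact ⟨ne_mxF A a k h.1, ne_mxF B a k h.2⟩
  | .imp A B, a, k, h => by
    simp only [mxF, noEpsF, Bool.and_eq_true] at h ⊢; exact ⟨ne_mxF A a k h.1, ne_mxF B a k h.2⟩
  | .not A, a, k, h => by simp only [mxF, noEpsF] at h ⊢; exact ne_mxF A a k h
  | .all A, a, k, h => by simp only [mxF, noEpsF] at h ⊢; exact ne_mxF A a _ h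
  | .ex A, a, k, h => by simp only [mxF, noEpsF] at h ⊢; exact ne_mxF A a _ h

theorem ne_uclose (A : Fm) (h : noEpsF A = true) : noEpsF (uclose A) = true := by
  unfold uclose
  induction (fvF A).dedup with
  | nil => exact h
  | cons a l ih => simp [noEpsF, ne_abF _ _ _ ih]

mutual
theorem sz_abT : ∀ (t : Tm) (a k : ℕ), szT (abT a k t) = szT t
  | .bvar _, _, _ => by simp [abT]
  | .fvar _, _, _ => by simp only [abT]; split_ifs <;> simp [szT]
  | .func f ts, a, k => by simp only [abT, szT, sz_abTs ts]
  | .eps A, a, k => by simp only [abT, szT, sz_abF A]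
theorem sz_abTs : ∀ (ts : Tms) (a k : ℕ), szTs (abTs a k ts) = szTs ts
  | .nil, _, _ => by simp [abTs]
  | .cons t ts, a, k => by simp only [abTs, szTs, sz_abT t, sz_abTs ts]
theorem sz_abF : ∀ (A : Fm) (a k : ℕ), szF (abF a k A) = szF A
  | .atom _ ts, a, k => by simp only [abF, szF, sz_abTs ts]
  | .and A B, a, k => by simp only [abF, szF, sz_abF A, sz_abF B]
  | .or A B, a, k => by simp only [abF, szF, sz_abF A, sz_abF B]
  | .imp A B, a, k => by simp only [abF, szF, sz_abF A, sz_abF B]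
  | .not A, a, k => by simp only [abF, szF, sz_abF A]
  | .all A, a, k => by simp only [abF, szF, sz_abF A]
  | .ex A, a, k => by simp only [abF, szF, sz_abF A]
end

mutual
theorem len_fvT : ∀ t : Tm, (fvT t).length ≤ szT t
  | .bvar _ => by simp [fvT]
  | .fvar _ => by simp [fvT, szT]
  | .func f ts => by have := len_fvTs ts; simp only [fvT, szT]; omega
  | .eps A => by have := len_fvF A; simp only [fvT, szT]; omega
theorem len_fvTs : ∀ ts : Tms, (fvTs ts).length ≤ szTs ts
  | .nil => by simp [fvTs]
  | .cons t ts => by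
    have := len_fvT t; have := len_fvTs ts; simp only [fvTs, szTs, List.length_append]; omega
theorem len_fvF : ∀ A : Fm, (fvF A).length ≤ szF A
  | .atom _ ts => by have := len_fvTs ts; simp only [fvF, szF]; omega
  | .and A B => by
    have := len_fvF A; have := len_fvF B; simp only [fvF, szF, List.length_append]; omega
  | .or A B => by
    have := len_fvF A; have := len_fvF B; simp only [fvF, szF, List.length_append]; omega
  | .imp A B => by
    have := len_fvF A; have := len_fvF B; simp only [fvF, szF, List.length_append]; omega
  | .not A => by have := len_fvF A; simp only [fvF, szF]; omega
  | .all A => by have := len_fvF A; simp only [fvF, szF]; omega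
  | .ex A => by have := len_fvF A; simp only [fvF, szF]; omega
end

mutual
theorem sz_mxT : ∀ (t : Tm) (a k : ℕ), szT (mxT a k t) = szT t
  | .bvar _, _, _ => by simp only [mxT]; split_ifs <;> simp [szT]
  | .fvar _, _, _ => by simp [mxT]
  | .func f ts, a, k => by simp only [mxT, szT, sz_mxTs ts]
  | .eps A, a, k => by simp only [mxT]
theorem sz_mxTs : ∀ (ts : Tms) (a k : ℕ), szTs (mxTs a k ts) = szTs ts
  | .nil, _, _ => by simp [mxTs]
  | .cons t ts, a, k => by simp only [mxTs, szTs, sz_mxT t, sz_mxTs ts]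
end

theorem sz_mxF : ∀ (A : Fm) (a k : ℕ), szF (mxF a k A) ≤ szF A
  | .atom _ ts, a, k => by simp only [mxF, szF, sz_mxTs ts]; exact le_refl _
  | .and A B, a, k => by
    have := sz_mxF A a k; have := sz_mxF B a k; simp only [mxF, szF]; omega
  | .or A B, a, k => by
    have := sz_mxF A a k; have := sz_mxF B a k; simp only [mxF, szF]; omega
  | .imp A B, a, k => by
    have := sz_mxF A a k; have := sz_mxF B a k; simp only [mxF, szF]; omega
  | .not A, a, k => by have := sz_mxF A a k; simp only [mxF, szF]; omega
  | .all A, a, k => by have := sz_mxF A a (k+1); simp only [mxF, szF]; omega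
  | .ex A, a, k => by have := sz_mxF A a (k+1); simp only [mxF, szF]; omega

theorem sz_uclose (A : Fm) : szF (uclose A) ≤ 2 * szF A := by
  have h1 : ∀ l : List ℕ, szF (l.foldr (fun a B => Fm.all (abF a 0 B)) A) = l.length + szF A := by
    intro l
    induction l with
    | nil => simp
    | cons a l ih => simp only [List.foldr_cons, szF, sz_abF, ih, List.length_cons]; omega
  unfold uclose
  rw [h1]
  have := (List.dedup_sublist (fvF A)).length_le
  have := len_fvF A
  omega

theorem sz_H (k : ℕ) : ∀ t : CT, szF (fH k t) ≤ 4^k * (sz t + 5) := by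
  induction k with
  | zero => intro t; simp [fH, fP, szF, szTs, sz_emb]; omega
  | succ k ih =>
    intro t
    have h1 := ih (b 0)
    have h2 := ih (app (lift t) (b 0))
    simp only [sz, sz_lift] at h1 h2
    simp only [fH, szF, pow_succ]
    have : 1 ≤ 4^k := Nat.one_le_pow _ _ (by norm_num)
    nlinarith [Nat.zero_le (4^k * sz t)]

theorem ne_H (k : ℕ) : ∀ t : CT, noEpsF (fH k t) = true := by
  induction k with
  | zero => intro t; simp [fH, fP, noEpsF, noEpsTs, noEps_emb]
  | succ k ih => intro t; simp [fH, noEpsF, ih]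

theorem sz_chain (j : ℕ) : ∀ T : CT, sz (chain j T) = sz T + 2 * j + 4 := by
  induction j with
  | zero => intro T; simp [chain, sz]; omega
  | succ j ih => intro T; simp [chain, ih, sz]; omega

theorem seq_FO (n : ℕ) : FOSeq (seqL n) (seqR n) := by
  constructor
  · have h : isFO (taut n) = true := by
      apply ne_uclose
      simp only [noEpsF, matrix, ne_mxF _ _ _ (ne_H _ _), Bool.and_self]
    simp only [seqL, List.mem_cons, forall_eq_or_imp]
    refine ⟨h, ?_⟩
    simp [Ax, isFO, ax0, ax1, ax2, ax3, ax4, fP, fE, noEpsF, noEpsTs, noEps_emb, ne_H]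
  · simp [seqR, isFO, fP, noEpsF, noEpsTs, noEps_emb]

theorem seq_weak (n : ℕ) : WeakSeq (seqL n) (seqR n) := by
  constructor
  · have h : negW (taut n) = true := by
      apply W_uclose
      simp [negW, matrix, W_mx]
    simp only [seqL, List.mem_cons, forall_eq_or_imp]
    refine ⟨h, ?_⟩
    simp [Ax, ax0, ax1, ax2, ax3, ax4, fP, fE, negW, posW, fH]
  · simp [seqR, fP, posW]

theorem seq_size (n : ℕ) : seqSize (seqL n) (seqR n) ≤ 1000 * 16^n := by
  have h0 : szF (taut n) ≤ 2 * (1 + 4^(n+2) * 6 + 4^(n+2) * 6) := by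
    refine (sz_uclose _).trans ?_
    have h1 := sz_mxF (fH (n+2) D) (maxFv (fH (n+2) D) + 1) 0
    have h2 := sz_H (n+2) D
    simp only [sz] at h2
    simp only [szF, matrix]
    omega
  have h1 : seqSize (seqL n) (seqR n) = szF (taut n) + (6 + 2 * n + 48) := by
    simp [seqSize, seqL, seqR, Ax, ax0, ax1, ax2, ax3, ax4, fH, fP, fE, szF, szTs, sz_emb, sz,
      sz_chain, lift]
    ring_nf
  have h2 : (4:ℕ)^(n+2) = 16 * 4^n := by ring
  have h3 : (4:ℕ)^n ≤ 16^n := Nat.pow_le_pow_left (by norm_num) n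
  have h4 : n < 4^n := Nat.lt_pow_self (by norm_num)
  omega

theorem lower (n : ℕ) (d : Deriv (seqL n) (seqR n)) (hc : d.cutFms = []) :
    iterExp n 2 ≤ d.size := by
  obtain ⟨L, h1, h2⟩ := herbrand d hc (seq_weak n)
  by_contra hlt
  have hcard : (L.map (fun t => toNat (valT t))).toFinset.card < (Finset.range (iterExp n 2)).card := by
    refine lt_of_le_of_lt (List.toFinset_card_le _) ?_
    simp; omega
  obtain ⟨m, hm1, hm2⟩ := Finset.exists_mem_notMem_of_card_lt_card hcard
  simp only [List.mem_toFinset, List.mem_map, not_exists, not_and] at hm2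
  simp only [Finset.mem_range] at hm1
  let v : ℕ → Tms → Prop := fun p ts => match p, ts with
    | 0, .cons t .nil => toNat (valT t) ≤ m
    | 1, .cons s (.cons t .nil) => valT s = valT t
    | _, _ => True
  have h3 := h2 v L (List.Subset.refl _) ?_
  · simp only [seqR, SomeP, List.mem_singleton, exists_eq_left, fP, ev] at h3
    have h4 : toNat (valT (emb (chain n D))) ≤ m := h3
    rw [itM_chain n 2 D itM_D] at h4
    omega
  · simp only [seqL, Ax, AllP_cons]
    refine ⟨?_, ?_, ?_, ?_, ?_, ?_, by simp [AllP]⟩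
    · obtain ⟨k, hk⟩ := Tau_uclose (matrix (fH (n+2) D))
      exact Tau_ev _ _ _ _ hk
    · simp only [ax0, fP, ev]
      exact Nat.zero_le m
    · simp only [ax1, fH, fP, ev, inst0, subF]
      intro t ht h
      have h5 : toNat (valT t) ≤ m := h
      have h6 := hm2 t ht
      show toNat (valT t) + 1 ≤ m
      omega
    · simp only [ax2, fE, ev, inst0, subF]
      intro f _ x _
      rfl
    · simp only [ax3, fE, ev, inst0, subF]
      intro s _ t _ x _ h
      exact congrArg (fun z => appM z _) h
    · simp only [ax4, fP, fE, ev, inst0, subF]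
      intro s _ t _ h h'
      have h5 := congrArg toNat h
      exact le_of_eq_of_le h5 h'

/-! ## Part D: conclusion -/

theorem iterExp_succ' (k n : ℕ) : iterExp (k+1) n = iterExp k (2^n) := by
  induction k with
  | zero => rfl
  | succ k ih => simp only [iterExp] at ih ⊢; rw [ih]

theorem iterExp_add (k m n : ℕ) : iterExp (k + m) n = iterExp k (iterExp m n) := by
  induction k with
  | zero => simp [iterExp]
  | succ k ih => rw [Nat.succ_add]; simp only [iterExp, ih]

theorem iterExp_lt (k : ℕ) {m n : ℕ} (h : m < n) : iterExp k m < iterExp k n := by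
  induction k with
  | zero => exact h
  | succ k ih => exact Nat.pow_lt_pow_right (by norm_num) ih

theorem iterExp_big (m : ℕ) : 2 * m + 2 < iterExp (m+1) 2 := by
  induction m with
  | zero => simp [iterExp]
  | succ m ih =>
    have h1 : iterExp (m+1) 2 < 2 ^ iterExp (m+1) 2 := Nat.lt_pow_self (by norm_num)
    have h2 : iterExp (m+1+1) 2 = 2 ^ iterExp (m+1) 2 := rfl
    have h3 : iterExp (m+1) 2 = 2 ^ iterExp m 2 := rfl
    have h4 : 2 ^ (2*m+3) ≤ 2 ^ iterExp (m+1) 2 := Nat.pow_le_pow_right (by norm_num) ih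
    have h5 : 2 * m < 2 ^ (2 * m) := Nat.lt_pow_self (by norm_num)
    rw [h2]
    rw [pow_add] at h4
    omega

theorem pow_log (i : ℕ) : 16 ^ Nat.log 2 i ≤ (i+1)^4 := by
  have h1 : 2 ^ Nat.log 2 i ≤ i + 1 := by
    rcases Nat.eq_zero_or_pos i with rfl | h
    · simp
    · exact (Nat.pow_log_le_self 2 h.ne').trans (by omega)
  calc 16 ^ Nat.log 2 i = (2 ^ Nat.log 2 i)^4 := by
        rw [← pow_mul, mul_comm, pow_mul]; norm_num
    _ ≤ _ := Nat.pow_le_pow_left h1 4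

theorem sq_bound (n : ℕ) : (n+1)^2 ≤ 16^n := by
  have h : n + 1 ≤ 4^n := Nat.lt_pow_self (by norm_num)
  calc (n+1)^2 ≤ (4^n)^2 := Nat.pow_le_pow_left h 2
    _ = 16^n := by rw [← pow_mul, mul_comm, pow_mul]; norm_num

/-- There is a family of first-order sequents `S i` such that:
(1) the size of `S i` is polynomial in `i`; (2) no elementary function of `i`
bounds the size of the smallest cut-free LK-proofs of `S i`; (3) `S i` has
LK-proofs with cuts of polynomial size; (4) `S i` contains weak quantifiers
only; (5) for every cut formula `A` of the polynomial-size proof, the formula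
`∀x̄ (A^M → A^M)` occurs in the antecedent of `S i`. -/
theorem worst_case_with_tautological_universal_formulas :
    ∃ S : ℕ → List Fm × List Fm,
      (∀ i, FOSeq (S i).1 (S i).2) ∧
      -- (1)
      (∃ p : Polynomial ℕ, ∀ i, seqSize (S i).1 (S i).2 ≤ p.eval i) ∧
      -- (2)
      (∀ f : ℕ → ℕ, IsElementary f →
        ¬ ∀ i, ∃ d : Deriv (S i).1 (S i).2,
            d.Std ∧ d.cutFms = [] ∧ d.size ≤ f i) ∧
      -- (3) together with (5)
      (∃ q : Polynomial ℕ, ∀ i, ∃ d : Deriv (S i).1 (S i).2,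
          d.Std ∧ d.size ≤ q.eval i ∧
          ∀ A ∈ d.cutFms,
            uclose (Fm.imp (matrix A) (matrix A)) ∈ (S i).1) ∧
      -- (4)
      (∀ i, WeakSeq (S i).1 (S i).2) := by
  have hp : ∀ i, (Polynomial.C 1000 * (Polynomial.X + 1)^4 : Polynomial ℕ).eval i
      = 1000 * (i+1)^4 := by intro i; simp
  refine ⟨fun i => (seqL (Nat.log 2 i), seqR (Nat.log 2 i)), fun i => seq_FO _,
    ⟨Polynomial.C 1000 * (Polynomial.X + 1)^4, fun i => ?_⟩, ?_,
    ⟨Polynomial.C 1000 * (Polynomial.X + 1)^4, fun i => ?_⟩, fun i => seq_weak _⟩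
  · rw [hp]
    exact (seq_size _).trans (Nat.mul_le_mul_left _ (pow_log i))
  · rintro f ⟨k, hf⟩ hall
    obtain ⟨d, -, hc, hd⟩ := hall (2 ^ (k + 1 + (k + 3)))
    have hlog : Nat.log 2 (2 ^ (k + 1 + (k + 3))) = k + 1 + (k + 3) :=
      Nat.log_pow (by norm_num) _
    have h1 : iterExp (Nat.log 2 (2 ^ (k + 1 + (k + 3)))) 2 ≤ f (2 ^ (k + 1 + (k + 3))) :=
      (lower _ d hc).trans hd
    have h2 := hf (2 ^ (k + 1 + (k + 3)))
    rw [← iterExp_succ'] at h2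
    rw [hlog, iterExp_add] at h1
    have h3 := iterExp_big (k+2)
    have h4 := iterExp_lt (k+1) (show k + 1 + (k + 3) < iterExp (k+3) 2 by
      have : k + 2 + 1 = k + 3 := rfl
      rw [this] at h3; omega)
    omega
  · obtain ⟨d, h1, h2, h3⟩ := upper (Nat.log 2 i)
    refine ⟨d, h1, ?_, ?_⟩
    · rw [hp]
      exact h2.trans (Nat.mul_le_mul_left _ ((sq_bound _).trans (pow_log i)))
    · intro A hA
      rw [h3 A hA]
      exact List.mem_cons_self

end EpsCalc
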